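/- For every integer n ≥ 2 and every real ρ > 0, with λ = (n-1)/2, the series B(ρ) = Σ_{l=1}^∞ (2(l+n-1)/(n-1)) C(l+n-2, l) √(l(l+1)) e^{-2ρl} converges, and |B(ρ) - [(1/λ) S_{n,2}(ρ) + (1/(2λ) + 2) S_{n,1}(ρ) + (1 - 1/(8λ)) S_{n,0}(ρ)]| ≤ (1/4) S_{n,-1}(ρ), where S_{n,-1}(ρ) = Σ_{l=1}^∞ C(l+n-2, l) e^{-2ρl} / l. -/

import Mathlib

/-- `S n m ρ = Σ_{l=1}^∞ C(l+n-2, l) · l^m · e^{-2ρl}`. -/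
noncomputable def S (n : ℕ) (m : ℤ) (ρ : ℝ) : ℝ :=
  ∑' l : ℕ, (Nat.choose (l + 1 + n - 2) (l + 1) : ℝ) * ((l : ℝ) + 1) ^ m *
    Real.exp (-2 * ρ * ((l : ℝ) + 1))

/-- The term of the series `B(ρ) = Σ_{l=1}^∞ (2(l+n-1)/(n-1)) C(l+n-2,l) √(l(l+1)) e^{-2ρl}`
(the index below is shifted so that `l : ℕ` corresponds to the summation index `l+1`). -/
noncomputable def Bterm (n : ℕ) (ρ : ℝ) (l : ℕ) : ℝ :=
  2 * (((l : ℝ) + 1) + (n : ℝ) - 1) / ((n : ℝ) - 1) * (Nat.choose (l + 1 + n - 2) (l + 1) : ℝ) *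
    Real.sqrt (((l : ℝ) + 1) * ((l : ℝ) + 2)) * Real.exp (-2 * ρ * ((l : ℝ) + 1))

/-!
With `x = l` the coefficient `2(l+n-1)/(n-1)` is `x/λ + 2`. As `(x + 1/2)² - x(x+1) = 1/4`,
`√(x(x+1)) = x + 1/2 - 1/(4(x + 1/2 + √(x(x+1))))`, and `x ≤ √(x(x+1)) ≤ x + 1/2` gives
`√(x(x+1)) = x + 1/2 - 1/(8x) + r` with `0 ≤ r ≤ 1/(8x(2x+1))`. Multiplied by `x/λ + 2`, the first
three terms give a quadratic polynomial in `x` minus `1/(4x)`, and the last one lies between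
`0` and `1/(2x)` when `λ ≥ 1/8`, so the polynomial is correct up to `1/(4x)`. Summing against
`C(l+n-2, l) e^{-2ρl}` yields the theorem.
-/

theorem summable_and_norm_tsum_sub_le {ι E : Type*} [NormedAddCommGroup E] [CompleteSpace E]
    {f g : ι → E} {b : ι → ℝ} {A : E} {B : ℝ} (hg : HasSum g A) (hb : HasSum b B)
    (hfg : ∀ i, ‖f i - g i‖ ≤ b i) : Summable f ∧ ‖∑' i, f i - A‖ ≤ B := by
  have hf : Summable f := by
    simpa only [sub_add_cancel] using
      (Summable.of_norm_bounded hb.summable hfg).add hg.summable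
  exact ⟨hf, (hf.hasSum.sub hg).norm_le_of_bounded hb hfg⟩

section SqrtExpansion

variable {x : ℝ}

theorem le_sqrt_mul_add_one (hx : 0 ≤ x) : x ≤ √(x * (x + 1)) :=
  Real.le_sqrt_of_sq_le (by nlinarith)

theorem sqrt_mul_add_one_le_add_half (hx : 0 ≤ x) : √(x * (x + 1)) ≤ x + 1 / 2 :=
  Real.sqrt_le_iff.mpr ⟨by positivity, by nlinarith⟩

theorem add_half_sub_sqrt_mul_add_one (hx : 0 ≤ x) :
    x + 1 / 2 - √(x * (x + 1)) = 1 / (4 * (x + 1 / 2 + √(x * (x + 1)))) := by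
  have hsq : √(x * (x + 1)) ^ 2 = x * (x + 1) := Real.sq_sqrt (by positivity)
  rw [eq_div_iff (by positivity)]
  linear_combination -4 * hsq

/-- The remainder of the expansion `√(x(x+1)) ≈ x + 1/2 - 1/(8x)` as `x → ∞`. -/
noncomputable def sqrtRemainder (x : ℝ) : ℝ :=
  √(x * (x + 1)) - (x + 1 / 2 - 1 / (8 * x))

theorem sqrtRemainder_nonneg (hx : 0 < x) : 0 ≤ sqrtRemainder x := by
  have h : x + 1 / 2 - √(x * (x + 1)) ≤ 1 / (8 * x) := by
    rw [add_half_sub_sqrt_mul_add_one hx.le]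
    exact one_div_le_one_div_of_le (by positivity) (by linarith [le_sqrt_mul_add_one hx.le])
  unfold sqrtRemainder
  linarith

theorem sqrtRemainder_le (hx : 0 < x) : sqrtRemainder x ≤ 1 / (8 * x * (2 * x + 1)) := by
  have h : 1 / (4 * (2 * x + 1)) ≤ x + 1 / 2 - √(x * (x + 1)) := by
    rw [add_half_sub_sqrt_mul_add_one hx.le]
    exact one_div_le_one_div_of_le (by positivity)
      (by linarith [sqrt_mul_add_one_le_add_half hx.le])
  calc sqrtRemainder x = 1 / (8 * x) - (x + 1 / 2 - √(x * (x + 1))) := by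
        unfold sqrtRemainder
        ring
    _ ≤ 1 / (8 * x) - 1 / (4 * (2 * x + 1)) := by gcongr
    _ = 1 / (8 * x * (2 * x + 1)) := by
        field_simp
        ring

end SqrtExpansion

section QuadraticApproximation

variable {lam x : ℝ}

/-- The polynomial part of the expansion of `(x/λ + 2) √(x(x+1))` as `x → ∞`. -/
noncomputable def quadApprox (lam x : ℝ) : ℝ :=
  (1 / lam) * x ^ 2 + (1 / (2 * lam) + 2) * x + (1 - 1 / (8 * lam))

theorem mul_sqrt_sub_quadApprox (hlam : lam ≠ 0) (hx : x ≠ 0) :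
    (x / lam + 2) * √(x * (x + 1)) - quadApprox lam x =
      (x / lam + 2) * sqrtRemainder x - 1 / 4 * x⁻¹ := by
  unfold sqrtRemainder quadApprox
  field_simp
  ring

theorem mul_sqrtRemainder_le (hlam : 1 / 8 ≤ lam) (hx : 0 < x) :
    (x / lam + 2) * sqrtRemainder x ≤ 1 / 2 * x⁻¹ := by
  have hcoeff : x / lam + 2 ≤ 4 * (2 * x + 1) := by
    have : x / lam ≤ 8 * x := by
      rw [div_le_iff₀ (by linarith)]
      nlinarith
    linarith
  calc (x / lam + 2) * sqrtRemainder x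
      ≤ 4 * (2 * x + 1) * (1 / (8 * x * (2 * x + 1))) :=
        mul_le_mul hcoeff (sqrtRemainder_le hx) (sqrtRemainder_nonneg hx) (by positivity)
    _ = 1 / 2 * x⁻¹ := by
        field_simp
        norm_num

theorem abs_mul_sqrt_sub_quadApprox_le (hlam : 1 / 8 ≤ lam) (hx : 0 < x) :
    |(x / lam + 2) * √(x * (x + 1)) - quadApprox lam x| ≤ 1 / 4 * x⁻¹ := by
  have hlam_pos : 0 < lam := by linarith
  have hnonneg : 0 ≤ (x / lam + 2) * sqrtRemainder x :=
    mul_nonneg (by positivity) (sqrtRemainder_nonneg hx)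
  have hle := mul_sqrtRemainder_le hlam hx
  rw [mul_sqrt_sub_quadApprox hlam_pos.ne' hx.ne', abs_le]
  constructor <;> linarith

end QuadraticApproximation

/-- The weight `C(l+n-2, l) e^{-2ρl}` common to `S n m ρ` and `B(ρ)`, with `l` shifted by one as
in `Bterm`. -/
noncomputable def binomExpWeight (n : ℕ) (ρ : ℝ) (l : ℕ) : ℝ :=
  (Nat.choose (l + 1 + n - 2) (l + 1) : ℝ) * Real.exp (-2 * ρ * ((l : ℝ) + 1))

theorem binomExpWeight_nonneg (n : ℕ) (ρ : ℝ) (l : ℕ) : 0 ≤ binomExpWeight n ρ l := by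
  unfold binomExpWeight
  positivity

theorem choose_add_sub_two_le_pow (n l : ℕ) :
    (l + 1 + n - 2).choose (l + 1) ≤ (l + 2) ^ n :=
  calc (l + 1 + n - 2).choose (l + 1)
      ≤ (l + 1 + n).choose (l + 1) := Nat.choose_le_choose _ (Nat.sub_le _ _)
    _ = (l + 1 + n).choose n := Nat.choose_symm_add
    _ ≤ (l + 2) ^ n := Nat.choose_add_le_add_one_pow _ _

theorem summable_binomExpWeight_mul_zpow (n : ℕ) (m : ℤ) {ρ : ℝ} (hρ : 0 < ρ) :
    Summable fun l : ℕ => binomExpWeight n ρ l * ((l : ℝ) + 1) ^ m := by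
  have hmajorant := ((summable_nat_add_iff 2).mpr
    (Real.summable_pow_mul_exp_neg_nat_mul (n + m.toNat) (by positivity : 0 < 2 * ρ))).mul_left
      (Real.exp (2 * ρ))
  refine hmajorant.of_nonneg_of_le
    (fun l => mul_nonneg (binomExpWeight_nonneg n ρ l) (by positivity)) fun l => ?_
  have hchoose : ((l + 1 + n - 2).choose (l + 1) : ℝ) ≤ ((l : ℝ) + 2) ^ n :=
    mod_cast choose_add_sub_two_le_pow n l
  have hzpow : ((l : ℝ) + 1) ^ m ≤ ((l : ℝ) + 2) ^ m.toNat :=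
    calc ((l : ℝ) + 1) ^ m ≤ ((l : ℝ) + 1) ^ (m.toNat : ℤ) :=
          zpow_le_zpow_right₀ (by simp) m.self_le_toNat
      _ = ((l : ℝ) + 1) ^ m.toNat := zpow_natCast _ _
      _ ≤ ((l : ℝ) + 2) ^ m.toNat := by gcongr; norm_num
  have hexp : Real.exp (-2 * ρ * ((l : ℝ) + 1)) =
      Real.exp (2 * ρ) * Real.exp (-(2 * ρ) * ((l : ℝ) + 2)) := by
    rw [← Real.exp_add]
    ring_nf
  calc binomExpWeight n ρ l * ((l : ℝ) + 1) ^ m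
      ≤ ((l : ℝ) + 2) ^ n * Real.exp (-2 * ρ * ((l : ℝ) + 1)) * ((l : ℝ) + 2) ^ m.toNat := by
        unfold binomExpWeight
        gcongr
    _ = Real.exp (2 * ρ) * (((l + 2 : ℕ) : ℝ) ^ (n + m.toNat) *
          Real.exp (-(2 * ρ) * ((l + 2 : ℕ) : ℝ))) := by
        rw [hexp]
        push_cast
        ring

theorem hasSum_S (n : ℕ) (m : ℤ) {ρ : ℝ} (hρ : 0 < ρ) :
    HasSum (fun l : ℕ => binomExpWeight n ρ l * ((l : ℝ) + 1) ^ m) (S n m ρ) := by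
  have hS : S n m ρ = ∑' l : ℕ, binomExpWeight n ρ l * ((l : ℝ) + 1) ^ m :=
    tsum_congr fun l => mul_right_comm _ _ _
  rw [hS]
  exact (summable_binomExpWeight_mul_zpow n m hρ).hasSum

theorem hasSum_binomExpWeight_mul_quadApprox (n : ℕ) {ρ : ℝ} (hρ : 0 < ρ) (lam : ℝ) :
    HasSum (fun l : ℕ => binomExpWeight n ρ l * quadApprox lam ((l : ℝ) + 1))
      ((1 / lam) * S n 2 ρ + (1 / (2 * lam) + 2) * S n 1 ρ + (1 - 1 / (8 * lam)) * S n 0 ρ) := by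
  refine ((((hasSum_S n 2 hρ).mul_left (1 / lam)).add
    ((hasSum_S n 1 hρ).mul_left (1 / (2 * lam) + 2))).add
    ((hasSum_S n 0 hρ).mul_left (1 - 1 / (8 * lam)))).congr_fun fun l => ?_
  simp only [quadApprox, zpow_ofNat]
  ring

theorem Bterm_eq_binomExpWeight_mul {n : ℕ} (hn : n ≠ 1) (ρ : ℝ) (l : ℕ) :
    Bterm n ρ l = binomExpWeight n ρ l *
      ((((l : ℝ) + 1) / (((n : ℝ) - 1) / 2) + 2) * √(((l : ℝ) + 1) * ((l : ℝ) + 1 + 1))) := by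
  have hn' : (n : ℝ) - 1 ≠ 0 := sub_ne_zero.mpr (mod_cast hn)
  have hcoeff : 2 * (((l : ℝ) + 1) + (n : ℝ) - 1) / ((n : ℝ) - 1) =
      ((l : ℝ) + 1) / (((n : ℝ) - 1) / 2) + 2 := by
    field_simp
    ring
  have hsucc : (l : ℝ) + 2 = (l : ℝ) + 1 + 1 := by ring
  rw [Bterm, binomExpWeight, hcoeff, hsucc]
  ring

theorem abs_Bterm_sub_binomExpWeight_mul_quadApprox_le {n : ℕ} (hn : 2 ≤ n) (ρ : ℝ) (l : ℕ) :
    |Bterm n ρ l - binomExpWeight n ρ l * quadApprox (((n : ℝ) - 1) / 2) ((l : ℝ) + 1)| ≤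
      1 / 4 * (binomExpWeight n ρ l * ((l : ℝ) + 1) ^ (-1 : ℤ)) := by
  have hlam : 1 / 8 ≤ ((n : ℝ) - 1) / 2 := by
    have : (2 : ℝ) ≤ n := mod_cast hn
    linarith
  have hw := binomExpWeight_nonneg n ρ l
  rw [Bterm_eq_binomExpWeight_mul (by lia), ← mul_sub, abs_mul, abs_of_nonneg hw, zpow_neg_one,
    mul_left_comm]
  exact mul_le_mul_of_nonneg_left (abs_mul_sqrt_sub_quadApprox_le hlam (by positivity)) hw

theorem stmt_8 (n : ℕ) (hn : 2 ≤ n) (ρ : ℝ) (hρ : 0 < ρ) (lam : ℝ) (hlam : lam = ((n : ℝ) - 1) / 2) :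
    Summable (Bterm n ρ) ∧
    |(∑' l : ℕ, Bterm n ρ l) -
        ((1 / lam) * S n 2 ρ + (1 / (2 * lam) + 2) * S n 1 ρ + (1 - 1 / (8 * lam)) * S n 0 ρ)| ≤
      (1 / 4) * S n (-1) ρ := by
  subst hlam
  exact summable_and_norm_tsum_sub_le (hasSum_binomExpWeight_mul_quadApprox n hρ _)
    ((hasSum_S n (-1) hρ).mul_left (1 / 4))
    (abs_Bterm_sub_binomExpWeight_mul_quadApprox_le hn ρ)
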